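/- Let (x,v) : I → ℝ³ × ℝ³ be a C¹ solution of the repulsive Kepler ODE with x(t) ≠ 0 and with constant angular momentum L = x × v ≠ 0 and Runge–Lenz vector R. Then the map t ↦ v(t) + (q/(2|L|²)) · L × x(t)/|x(t)| is constant on I, equal to L × R/|L|². Consequently v(t) moves on the 'velocity circle' of radius q/(2|L|) centered at L × R/|L|² in the plane orthogonal to L. -/

import Mathlib

/-!
Everything happens at a single point `(x, v)` of phase space. The vector `L = x × v` is orthogonal
to `v`, so `L × (v × L) = |L|² v`, and applying `L ×` to the Runge–Lenz vector gives
`L × R = |L|² v + (q/2) L × x/|x|`. Hence `v - L × R/|L|² = -(q/(2|L|²)) L × x/|x|`. This vector is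
orthogonal to `L`; since `x/|x|` is a unit vector orthogonal to `L`, its length is `|q|/(2|L|)`.
-/

open scoped RealInnerProductSpace

noncomputable section

/-- Euclidean three-space. -/
abbrev R3 : Type := EuclideanSpace ℝ (Fin 3)

/-- The cross product on `ℝ³`. -/
def cross3 (x y : R3) : R3 :=
  (WithLp.equiv 2 (Fin 3 → ℝ)).symm
    ![x 1 * y 2 - x 2 * y 1, x 2 * y 0 - x 0 * y 2, x 0 * y 1 - x 1 * y 0]

/-- The Runge–Lenz vector `R(x,v) = v × (x × v) + (q/2)·x/|x|`. -/
def rungeLenz (q : ℝ) (x v : R3) : R3 :=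
  cross3 v (cross3 x v) + (q / 2) • ‖x‖⁻¹ • x

section CrossProduct

open Matrix WithLp

theorem cross3_eq_toLp_crossProduct (x y : R3) : cross3 x y = toLp 2 (ofLp x ⨯₃ ofLp y) :=
  rfl

theorem R3.inner_eq_dotProduct (x y : R3) : ⟪x, y⟫ = ofLp x ⬝ᵥ ofLp y := by
  rw [EuclideanSpace.inner_eq_star_dotProduct, star_trivial, dotProduct_comm]

theorem cross3_zero_left (y : R3) : cross3 0 y = 0 := by
  simp [cross3_eq_toLp_crossProduct]

theorem cross3_add_right (x y z : R3) : cross3 x (y + z) = cross3 x y + cross3 x z := by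
  simp [cross3_eq_toLp_crossProduct]

theorem cross3_smul_right (r : ℝ) (x y : R3) : cross3 x (r • y) = r • cross3 x y := by
  simp [cross3_eq_toLp_crossProduct]

theorem inner_cross3_self_left (x y : R3) : ⟪cross3 x y, x⟫ = 0 := by
  rw [real_inner_comm, R3.inner_eq_dotProduct]
  exact dot_self_cross _ _

theorem inner_cross3_self_right (x y : R3) : ⟪cross3 x y, y⟫ = 0 := by
  rw [real_inner_comm, R3.inner_eq_dotProduct]
  exact dot_cross_self _ _

theorem cross3_cross3_eq_smul_sub_smul (x y z : R3) :
    cross3 x (cross3 y z) = ⟪x, z⟫ • y - ⟪x, y⟫ • z := by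
  simp only [cross3_eq_toLp_crossProduct, R3.inner_eq_dotProduct, cross_cross_eq_smul_sub_smul',
    dotProduct_comm (ofLp y), toLp_sub, toLp_smul, toLp_ofLp]

theorem norm_cross3_of_inner_eq_zero {x y : R3} (h : ⟪x, y⟫ = 0) :
    ‖cross3 x y‖ = ‖x‖ * ‖y‖ := by
  rw [cross3_eq_toLp_crossProduct, InnerProductGeometry.norm_ofLp_crossProduct,
    InnerProductGeometry.inner_eq_zero_iff_angle_eq_pi_div_two x y |>.mp h,
    Real.sin_pi_div_two, mul_one]

end CrossProduct

theorem norm_cross3_cross3_normalized {x : R3} (hx : x ≠ 0) (v : R3) :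
    ‖cross3 (cross3 x v) (‖x‖⁻¹ • x)‖ = ‖cross3 x v‖ := by
  have horth : ⟪cross3 x v, ‖x‖⁻¹ • x⟫ = 0 := by
    rw [inner_smul_right, inner_cross3_self_left, mul_zero]
  have hunit : ‖‖x‖⁻¹ • x‖ = 1 := norm_smul_inv_norm (𝕜 := ℝ) hx
  rw [norm_cross3_of_inner_eq_zero horth, hunit, mul_one]

theorem cross3_cross3_rungeLenz (q : ℝ) (x v : R3) :
    cross3 (cross3 x v) (rungeLenz q x v) =
      ‖cross3 x v‖ ^ 2 • v + (q / 2) • cross3 (cross3 x v) (‖x‖⁻¹ • x) := by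
  rw [rungeLenz, cross3_add_right, cross3_cross3_eq_smul_sub_smul, inner_cross3_self_right,
    zero_smul, sub_zero, real_inner_self_eq_norm_sq, cross3_smul_right]

theorem velocity_add_smul_cross3_normalized (q : ℝ) {x v : R3} (hL : cross3 x v ≠ 0) :
    v + (q / (2 * ‖cross3 x v‖ ^ 2)) • cross3 (cross3 x v) (‖x‖⁻¹ • x) =
      (‖cross3 x v‖ ^ 2)⁻¹ • cross3 (cross3 x v) (rungeLenz q x v) := by
  have hL2 : ‖cross3 x v‖ ^ 2 ≠ 0 := pow_ne_zero 2 (norm_ne_zero_iff.mpr hL)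
  have hcoeff : q / (2 * ‖cross3 x v‖ ^ 2) = (‖cross3 x v‖ ^ 2)⁻¹ * (q / 2) := by
    field_simp
  rw [cross3_cross3_rungeLenz, smul_add, inv_smul_smul₀ hL2, smul_smul, hcoeff]

theorem kepler_velocity_circle_general (q : ℝ) {x v L R : R3} (hL0 : L ≠ 0)
    (hL : cross3 x v = L) (hR : rungeLenz q x v = R) :
    v + (q / (2 * ‖L‖ ^ 2)) • cross3 L (‖x‖⁻¹ • x) = (‖L‖ ^ 2)⁻¹ • cross3 L R ∧
      ‖v - (‖L‖ ^ 2)⁻¹ • cross3 L R‖ = |q| / (2 * ‖L‖) ∧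
      ⟪v - (‖L‖ ^ 2)⁻¹ • cross3 L R, L⟫ = 0 := by
  subst hL hR
  have hx : x ≠ 0 := by
    rintro rfl
    exact hL0 (cross3_zero_left v)
  have hvel := velocity_add_smul_cross3_normalized q hL0
  have hoffset : v - (‖cross3 x v‖ ^ 2)⁻¹ • cross3 (cross3 x v) (rungeLenz q x v) =
      -((q / (2 * ‖cross3 x v‖ ^ 2)) • cross3 (cross3 x v) (‖x‖⁻¹ • x)) := by
    rw [← hvel, sub_add_cancel_left]
  refine ⟨hvel, ?_, ?_⟩
  · rw [hoffset, norm_neg, norm_smul, norm_cross3_cross3_normalized hx, Real.norm_eq_abs, abs_div,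
      abs_of_nonneg (by positivity : 0 ≤ 2 * ‖cross3 x v‖ ^ 2)]
    field_simp
  · rw [hoffset, inner_neg_left, real_inner_smul_left, inner_cross3_self_left, mul_zero, neg_zero]

/-- Along a solution of the repulsive Kepler ODE with nonzero conserved angular momentum
`L` and Runge–Lenz vector `R`, the map `t ↦ v(t) + (q/(2|L|²))·L × (x(t)/|x(t)|)` is
constant, equal to `L × R/|L|²`; consequently `v(t)` moves on the "velocity circle"
of radius `q/(2|L|)` centered at `L × R/|L|²` in the plane orthogonal to `L`. -/
theorem kepler_velocity_circle (q : ℝ) (hq : 0 < q)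
    (I : Set ℝ) (hI : Convex ℝ I) (x v : ℝ → R3) (L R : R3) (hL0 : L ≠ 0)
    (hx0 : ∀ t ∈ I, x t ≠ 0)
    (hx : ∀ t ∈ I, HasDerivWithinAt x (v t) I t)
    (hv : ∀ t ∈ I, HasDerivWithinAt v ((q / 2 / ‖x t‖ ^ 3) • x t) I t)
    (hL : ∀ t ∈ I, cross3 (x t) (v t) = L)
    (hR : ∀ t ∈ I, rungeLenz q (x t) (v t) = R) :
    ∀ t ∈ I,
      v t + (q / (2 * ‖L‖ ^ 2)) • cross3 L (‖x t‖⁻¹ • x t) = (‖L‖ ^ 2)⁻¹ • cross3 L R ∧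
      ‖v t - (‖L‖ ^ 2)⁻¹ • cross3 L R‖ = q / (2 * ‖L‖) ∧
      ⟪v t - (‖L‖ ^ 2)⁻¹ • cross3 L R, L⟫ = (0 : ℝ) := by
  intro t ht
  simpa only [abs_of_pos hq] using kepler_velocity_circle_general q hL0 (hL t ht) (hR t ht)
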